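/- arXiv:2509.02173 — 4 statements merged into one kernel-verified Lean document; each statement's English description precedes it below -/
import Mathlib

section
/- Let G be a finite group and let (X, L, s, t) be a connected directed multigraph with a nonempty finite set X of sites and a finite set L of links, where s, t : L → X assign to each link its start and end site. Let g : X → G be an assignment of group elements to sites. Then the number of maps h : L → G satisfying g(s(l))·h(l) = h(l)·g(t(l)) for every link l ∈ L equals (|G|/|C|)^{|L|} if all the values g(x), x ∈ X, lie in a single conjugacy class C of G, and equals 0 otherwise. -/
/-- Connectivity of a directed multigraph with sites `X` and links `L`,
ignoring orientation. -/
def MultigraphConnected {X L : Type*} (s t : L → X) : Prop :=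
  ∀ a b : X, Relation.ReflTransGen
    (fun u v => ∃ l : L, (s l = u ∧ t l = v) ∨ (s l = v ∧ t l = u)) a b

/-!
The conditions on the values `h l` are independent of each other. For a single link, the solutions
`k` of `a * k = k * b` form a coset of the centralizer of `b` as soon as one solution exists, and by
orbit-stabilizer the centralizer has order `|G| / |C|`. A solution `h` makes the two ends of every
link conjugate, so connectivity forces all the values of `g` into one conjugacy class.
-/

section Semiconj

theorem semiconjBy_mul_iff_commute {S : Type*} [Semigroup S] [IsLeftCancelMul S] {c k x y : S}
    (hc : SemiconjBy c x y) : SemiconjBy (c * k) x y ↔ Commute k x := by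
  rw [SemiconjBy, ← mul_assoc, ← hc.eq, mul_assoc, mul_assoc, mul_right_inj, commute_iff_eq]

variable {G : Type*} [Group G] {x y : G}

theorem card_carrier_mk_mul_card_centralizer (x : G) :
    Nat.card (ConjClasses.mk x).carrier * Nat.card (Subgroup.centralizer {x}) = Nat.card G := by
  rw [← ConjAct.orbit_eq_carrier_conjClasses, Nat.card_coe_set_eq, ← MulAction.index_stabilizer,
    Subgroup.nat_card_centralizer_nat_card_stabilizer, Subgroup.index_mul_card]
  rfl

theorem card_semiconjBy_eq_card_centralizer (hxy : IsConj x y) :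
    Nat.card {k : G // SemiconjBy k x y} = Nat.card (Subgroup.centralizer {x}) := by
  obtain ⟨c, hc⟩ := hxy
  refine (Nat.card_congr ((Equiv.mulLeft (c : G)).subtypeEquiv fun k ↦ ?_)).symm
  rw [Equiv.coe_mulLeft, semiconjBy_mul_iff_commute hc, Subgroup.mem_centralizer_singleton_iff,
    commute_iff_eq]

theorem card_semiconjBy_mul_card_carrier {C : ConjClasses G} (hx : x ∈ C.carrier)
    (hy : y ∈ C.carrier) :
    Nat.card {k : G // SemiconjBy k x y} * Nat.card C.carrier = Nat.card G := by
  rw [ConjClasses.mem_carrier_iff_mk_eq] at hx hy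
  have hxy : IsConj x y := ConjClasses.mk_eq_mk_iff_isConj.mp (hx.trans hy.symm)
  rw [card_semiconjBy_eq_card_centralizer hxy, ← hx, mul_comm, card_carrier_mk_mul_card_centralizer]

theorem card_pi_semiconjBy_mul_prod_card_carrier {L : Type*} [Fintype L] {C : L → ConjClasses G}
    {x y : L → G} (hx : ∀ l, x l ∈ (C l).carrier) (hy : ∀ l, y l ∈ (C l).carrier) :
    Nat.card {h : L → G // ∀ l, SemiconjBy (h l) (x l) (y l)} * ∏ l, Nat.card (C l).carrier =
      Nat.card G ^ Fintype.card L := by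
  calc
    _ = (∏ l, Nat.card {k : G // SemiconjBy k (x l) (y l)}) * ∏ l, Nat.card (C l).carrier := by
      rw [Nat.card_congr (Equiv.subtypePiEquivPi (p := fun l k ↦ SemiconjBy k (x l) (y l))),
        Nat.card_pi]
    _ = ∏ _l : L, Nat.card G := by
      simp only [← Finset.prod_mul_distrib, card_semiconjBy_mul_card_carrier (hx _) (hy _)]
    _ = Nat.card G ^ Fintype.card L := by rw [Finset.prod_const, Finset.card_univ]

end Semiconj

namespace MultigraphConnected

variable {X L : Type*} {s t : L → X}

theorem apply_eq_apply {α : Type*} (hconn : MultigraphConnected s t) {f : X → α}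
    (hf : ∀ l, f (s l) = f (t l)) (a b : X) : f a = f b := by
  induction hconn a b with
  | refl => rfl
  | tail _ hlink ih =>
    obtain ⟨l, ⟨rfl, rfl⟩ | ⟨rfl, rfl⟩⟩ := hlink
    · exact ih.trans (hf l)
    · exact ih.trans (hf l).symm

theorem exists_forall_mem_carrier {M : Type*} [Monoid M] [Nonempty X]
    (hconn : MultigraphConnected s t) {g : X → M} (hg : ∀ l, IsConj (g (s l)) (g (t l))) :
    ∃ C : ConjClasses M, ∀ x, g x ∈ C.carrier := by
  obtain ⟨x₀⟩ := ‹Nonempty X›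
  refine ⟨ConjClasses.mk (g x₀), fun x ↦ ConjClasses.mem_carrier_iff_mk_eq.mpr ?_⟩
  exact hconn.apply_eq_apply (f := fun z ↦ ConjClasses.mk (g z))
    (fun l ↦ ConjClasses.mk_eq_mk_iff_isConj.mpr (hg l)) x x₀

end MultigraphConnected

/-- For a finite group `G`, a connected directed multigraph with nonempty finite site
set `X` and finite link set `L` (with start and end maps `s, t : L → X`), and an
assignment `g : X → G` of group elements to sites, the number of maps `h : L → G`
with `g (s l) * h l = h l * g (t l)` for every link `l` equals `(|G| / |C|) ^ |L|`
if all the values `g x` lie in a single conjugacy class `C`, and `0` otherwise. -/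
theorem card_link_solutions_conjugacy
    {G X L : Type*} [Group G] [Fintype G] [Fintype X] [Nonempty X] [Fintype L]
    (s t : L → X) (hconn : MultigraphConnected s t) (g : X → G) :
    (∀ C : ConjClasses G, (∀ x : X, g x ∈ C.carrier) →
      (Nat.card {h : L → G // ∀ l : L, g (s l) * h l = h l * g (t l)} : ℚ) =
        ((Fintype.card G : ℚ) / (Nat.card C.carrier : ℚ)) ^ (Fintype.card L)) ∧
    ((¬ ∃ C : ConjClasses G, ∀ x : X, g x ∈ C.carrier) →
      Nat.card {h : L → G // ∀ l : L, g (s l) * h l = h l * g (t l)} = 0) := by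
  have solution_iff (h : L → G) : (∀ l, g (s l) * h l = h l * g (t l)) ↔
      ∀ l, SemiconjBy (h l) (g (t l)) (g (s l)) := forall_congr' fun _ ↦ eq_comm
  simp only [solution_iff]
  refine ⟨fun C hC ↦ ?_, fun hC ↦ ?_⟩
  · have hC₀ : (Nat.card C.carrier : ℚ) ≠ 0 := by
      have : Nonempty C.carrier := ‹Nonempty X›.map fun x ↦ ⟨g x, hC x⟩
      exact_mod_cast Nat.card_pos.ne'
    rw [div_pow, eq_div_iff (pow_ne_zero _ hC₀), ← Nat.card_eq_fintype_card (α := G)]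
    have count := card_pi_semiconjBy_mul_prod_card_carrier (fun l ↦ hC (t l)) (fun l ↦ hC (s l))
    rw [Finset.prod_const, Finset.card_univ] at count
    exact_mod_cast count
  · have no_solution : IsEmpty {h : L → G // ∀ l, SemiconjBy (h l) (g (t l)) (g (s l))} :=
      ⟨fun ⟨h, hh⟩ ↦ hC <| hconn.exists_forall_mem_carrier fun l ↦
        IsConj.symm ⟨toUnits (h l), hh l⟩⟩
    exact Nat.card_of_isEmpty
end

section
/- Let G be a finite group, let (X, L, s, t) be a connected directed multigraph with V = |X| ≥ 1 sites and E = |L| links, and for each site x let U_x be a finite-dimensional complex representation of G on a space W_x with character χ_{U_x}. Consider the space H = ((L → G) → ℂ) ⊗ (⊗_{x ∈ X} W_x) with the representation of ∏_{x ∈ X} G acting on basis vectors by (g_x)_x · (|h⟩ ⊗ (⊗_x w_x)) = |l ↦ g_{s(l)} h(l) g_{t(l)}⁻¹⟩ ⊗ (⊗_x U_x(g_x) w_x). Then the dimension of the invariant subspace equals Σ_C (|G|/|C|)^{E−V} · ∏_{x ∈ X} χ_{U_x}(C), the sum running over the conjugacy classes C of G. -/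
open scoped TensorProduct

/-- The action of a gauge transformation `g : X → G` on a link configuration
`h : L → G`: on the link `l` it sends `h l` to `g (s l) * h l * (g (t l))⁻¹`. -/
def gaugeSmul {G X L : Type*} [Group G] (s t : L → X) (g : X → G) (h : L → G) :
    L → G :=
  fun l => g (s l) * h l * (g (t l))⁻¹

lemma gaugeSmul_mul {G X L : Type*} [Group G] (s t : L → X) (g g' : X → G)
    (h : L → G) : gaugeSmul s t g (gaugeSmul s t g' h) = gaugeSmul s t (g * g') h := by
  funext l
  simp [gaugeSmul, mul_assoc]

/-- The representation of the group of gauge transformations `X → G` on the link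
Hilbert space `(L → G) → ℂ`, sending the basis vector `|h⟩` (the delta function at `h`)
to `|gaugeSmul g h⟩`. -/
noncomputable def linkRep (G : Type*) [Group G] {X L : Type*} (s t : L → X) :
    Representation ℂ (X → G) ((L → G) → ℂ) where
  toFun g := LinearMap.funLeft ℂ ℂ (gaugeSmul s t g⁻¹)
  map_one' := by
    ext f h
    show f (gaugeSmul s t 1⁻¹ h) = f h
    congr 1
    funext l
    simp [gaugeSmul]
  map_mul' g g' := by
    ext f h
    show f (gaugeSmul s t (g * g')⁻¹ h) =
      f (gaugeSmul s t g'⁻¹ (gaugeSmul s t g⁻¹ h))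
    rw [gaugeSmul_mul, mul_inv_rev]

/-- The representation of the group of gauge transformations `X → G` on the matter
Hilbert space `⨂ₓ Wₓ`, given on site `x` by `Uₓ (g x)`. -/
noncomputable def matterRepFamily {G X : Type*} [Group G] {W : X → Type*}
    [∀ x, AddCommGroup (W x)] [∀ x, Module ℂ (W x)]
    (U : ∀ x, Representation ℂ G (W x)) :
    Representation ℂ (X → G) (⨂[ℂ] x : X, W x) where
  toFun g := PiTensorProduct.map (fun x => U x (g x))
  map_one' := by
    simp only [Pi.one_apply, map_one]
    exact PiTensorProduct.map_one
  map_mul' g g' := by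
    simp only [Pi.mul_apply, map_mul]
    exact PiTensorProduct.map_mul _ _

/-!
The dimension is the average of the character over the gauge group. On the link space a gauge
transformation `g` permutes a basis, so its character counts the link configurations `h` with
`h l` conjugating `g (t l)` to `g (s l)` for every link `l`. If such an `h` exists then, the graph
being connected, all the `g x` lie in one conjugacy class `C`. Conversely, if they do, the values
`h l` can be chosen independently, each from a coset of a centralizer, that is, in `|G| / |C|` ways.
Each class `C` therefore contributes `|C| ^ V` gauge transformations of character
`(|G| / |C|) ^ E * ∏ₓ χₓ(C)` to the average over the `|G| ^ V` gauge transformations.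
-/

theorem inv_pow_mul_pow_mul_div_pow {M : Type*} [CommGroupWithZero M] {a b : M}
    (ha : a ≠ 0) (hb : b ≠ 0) (m n : ℕ) :
    (a ^ m)⁻¹ * (b ^ m * (a / b) ^ n) = (a / b) ^ ((n : ℤ) - m) := by
  rw [zpow_sub₀ (div_ne_zero ha hb), zpow_natCast, zpow_natCast, div_pow a b m]
  field_simp

section Trace

variable {R : Type*} [CommSemiring R]

theorem trace_funLeft {n : Type*} [Finite n] (σ : n → n) :
    LinearMap.trace R (n → R) (LinearMap.funLeft R R σ) =
      Nat.card (Function.fixedPoints σ) := by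
  classical
  have := Fintype.ofFinite n
  rw [LinearMap.trace_eq_matrix_trace R (Pi.basisFun R n)]
  simp [Matrix.trace, LinearMap.funLeft_apply, Pi.single_apply, Function.fixedPoints,
    Function.IsFixedPt, Fintype.card_subtype]

theorem trace_piTensorProduct_map {ι : Type*} [Fintype ι] {M : ι → Type*}
    [∀ i, AddCommMonoid (M i)] [∀ i, Module R (M i)] [∀ i, Module.Free R (M i)]
    [∀ i, Module.Finite R (M i)] (f : ∀ i, M i →ₗ[R] M i) :
    LinearMap.trace R (⨂[R] i, M i) (PiTensorProduct.map f) =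
      ∏ i, LinearMap.trace R (M i) (f i) := by
  classical
  let b (i : ι) := Module.Free.chooseBasis R (M i)
  simp_rw [LinearMap.trace_eq_matrix_trace R (Basis.piTensorProduct b),
    fun i => LinearMap.trace_eq_matrix_trace R (b i) (f i), Matrix.trace, Matrix.diag,
    LinearMap.toMatrix_apply, Fintype.prod_sum]
  refine Fintype.sum_congr _ _ fun p => ?_
  rw [Basis.piTensorProduct_apply, PiTensorProduct.map_tprod,
    Basis.piTensorProduct_repr_tprod_apply]

end Trace

section Conjugacy

variable {G : Type*} [Group G]

theorem card_semiconjBy_of_isConj {a b : G} (h : IsConj a b) :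
    Nat.card {k // SemiconjBy k a b} = Nat.card (Subgroup.centralizer {a}) := by
  obtain ⟨c, hc⟩ := h
  refine Nat.card_congr ((Equiv.mulLeft (c : G)⁻¹).subtypeEquiv fun k => ?_)
  rw [Equiv.coe_mulLeft, Subgroup.mem_centralizer_singleton_iff]
  refine ⟨fun hk => (hc.inv_symm_left.mul_left hk).eq, fun hk => ?_⟩
  simpa using hc.mul_left hk

theorem card_conjClass_carrier_mul_card_centralizer (a : G) :
    Nat.card (ConjClasses.mk a).carrier * Nat.card (Subgroup.centralizer {a}) = Nat.card G := by
  rw [Subgroup.nat_card_centralizer_nat_card_stabilizer, ← ConjAct.orbit_eq_carrier_conjClasses,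
    Nat.card_coe_set_eq, ← MulAction.index_stabilizer, Subgroup.index_mul_card]
  rfl

theorem card_conjClass_carrier_ne_zero [Finite G] (C : ConjClasses G) : Nat.card C.carrier ≠ 0 := by
  obtain ⟨a, rfl⟩ := C.exists_rep
  have : Nonempty (ConjClasses.mk a).carrier := ⟨⟨a, ConjClasses.mem_carrier_mk⟩⟩
  exact Nat.card_pos.ne'

theorem card_centralizer_eq_div {k : Type*} [DivisionRing k] [CharZero k] [Finite G] (a : G) :
    (Nat.card (Subgroup.centralizer {a}) : k) =
      Nat.card G / Nat.card (ConjClasses.mk a).carrier := by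
  rw [eq_div_iff (Nat.cast_ne_zero.mpr (card_conjClass_carrier_ne_zero _)), ← Nat.cast_mul,
    mul_comm, card_conjClass_carrier_mul_card_centralizer]

theorem card_pi_conjClass {X : Type*} [Finite X] (C : ConjClasses G) :
    Nat.card {g : X → G // ∀ x, ConjClasses.mk (g x) = C} = Nat.card C.carrier ^ Nat.card X := by
  simp_rw [← ConjClasses.mem_carrier_iff_mk_eq]
  rw [← Nat.card_fun]
  exact Nat.card_congr (Equiv.subtypePiEquivPi (p := fun _ a => a ∈ C.carrier))

theorem character_out_mk {k V : Type*} [Field k] [AddCommGroup V] [Module k V]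
    (ρ : Representation k G V) (a : G) :
    ρ.character (Quotient.out (ConjClasses.mk a)) = ρ.character a := by
  have h : IsConj a (Quotient.out (ConjClasses.mk a)) :=
    (ConjClasses.mk_eq_mk_iff_isConj.mp (Quotient.out_eq (ConjClasses.mk a))).symm
  obtain ⟨c, hc⟩ := isConj_iff.mp h
  rw [← hc, ρ.char_conj]

end Conjugacy

theorem MultigraphConnected.apply_eq {X L α : Type*} {s t : L → X}
    (hconn : MultigraphConnected s t) {f : X → α} (hf : ∀ l, f (s l) = f (t l)) (a b : X) :
    f a = f b := by
  induction hconn a b with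
  | refl => rfl
  | tail _ hl ih =>
    obtain ⟨l, ⟨rfl, rfl⟩ | ⟨rfl, rfl⟩⟩ := hl
    · exact ih.trans (hf l)
    · exact ih.trans (hf l).symm

section GaugeFixedPoints

variable {G X L : Type*} [Group G] {s t : L → X} {g : X → G}

theorem isFixedPt_gaugeSmul_iff {h : L → G} :
    Function.IsFixedPt (gaugeSmul s t g) h ↔ ∀ l, SemiconjBy (h l) (g (t l)) (g (s l)) :=
  funext_iff.trans (forall_congr' fun _ => mul_inv_eq_iff_eq_mul.trans eq_comm)

variable (s t g) in
theorem fixedPoints_gaugeSmul_inv :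
    Function.fixedPoints (gaugeSmul s t g⁻¹) = Function.fixedPoints (gaugeSmul s t g) := by
  ext h
  simp [Function.mem_fixedPoints, isFixedPt_gaugeSmul_iff]

theorem card_fixedPoints_gaugeSmul {k : Type*} [Field k] [CharZero k] [Finite G] [Finite L]
    {C : ConjClasses G} (hg : ∀ x, ConjClasses.mk (g x) = C) :
    (Nat.card (Function.fixedPoints (gaugeSmul s t g)) : k) =
      ((Nat.card G : k) / Nat.card C.carrier) ^ Nat.card L := by
  have := Fintype.ofFinite L
  have hlink (l : L) : (Nat.card {a // SemiconjBy a (g (t l)) (g (s l))} : k) =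
      (Nat.card G : k) / Nat.card C.carrier := by
    have hconj : IsConj (g (t l)) (g (s l)) :=
      ConjClasses.mk_eq_mk_iff_isConj.mp ((hg _).trans (hg _).symm)
    rw [card_semiconjBy_of_isConj hconj, card_centralizer_eq_div, hg]
  let e : Function.fixedPoints (gaugeSmul s t g) ≃
      ∀ l, {a // SemiconjBy a (g (t l)) (g (s l))} :=
    (Equiv.subtypeEquivRight fun _ => isFixedPt_gaugeSmul_iff).trans
      (Equiv.subtypePiEquivPi (p := fun l a => SemiconjBy a (g (t l)) (g (s l))))
  rw [Nat.card_congr e, Nat.card_pi, Nat.cast_prod, Fintype.prod_congr _ _ hlink,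
    Finset.prod_const, Finset.card_univ, Nat.card_eq_fintype_card (α := L)]

theorem MultigraphConnected.exists_conjClass_of_isFixedPt [Nonempty X]
    (hconn : MultigraphConnected s t) {h : L → G}
    (hfix : Function.IsFixedPt (gaugeSmul s t g) h) :
    ∃ C, ∀ x, ConjClasses.mk (g x) = C := by
  obtain ⟨x₀⟩ := ‹Nonempty X›
  have hlink (l : L) : ConjClasses.mk (g (s l)) = ConjClasses.mk (g (t l)) :=
    (ConjClasses.mk_eq_mk_iff_isConj.mpr
      ⟨toUnits (h l), isFixedPt_gaugeSmul_iff.mp hfix l⟩).symm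
  exact ⟨_, fun x => hconn.apply_eq (f := fun x => ConjClasses.mk (g x)) hlink x x₀⟩

theorem MultigraphConnected.sum_card_fixedPoints_gaugeSmul_mul {k : Type*} [Field k] [CharZero k]
    [Finite G] [Finite X] [Nonempty X] [Finite L] [Fintype (X → G)] [Fintype (ConjClasses G)]
    (hconn : MultigraphConnected s t) (F : (X → ConjClasses G) → k) :
    ∑ g : X → G, Nat.card (Function.fixedPoints (gaugeSmul s t g)) *
        F (fun x => ConjClasses.mk (g x)) =
      ∑ C : ConjClasses G, (Nat.card C.carrier : k) ^ Nat.card X *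
        ((Nat.card G : k) / Nat.card C.carrier) ^ Nat.card L * F (fun _ => C) := by
  classical
  have := Fintype.ofFinite (X → ConjClasses G)
  have hvanish (g : X → G)
      (hg : (fun x => ConjClasses.mk (g x)) ∉ Set.range (Function.const X)) :
      Nat.card (Function.fixedPoints (gaugeSmul s t g)) = 0 := by
    have : IsEmpty (Function.fixedPoints (gaugeSmul s t g)) := ⟨fun h => hg <|
      (hconn.exists_conjClass_of_isFixedPt h.2).imp fun _ hC => funext fun x => (hC x).symm⟩
    exact Nat.card_of_isEmpty
  have hconst (C : ConjClasses G) :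
      ∑ g : X → G with (fun x => ConjClasses.mk (g x)) = Function.const X C,
        Nat.card (Function.fixedPoints (gaugeSmul s t g)) * F (fun x => ConjClasses.mk (g x)) =
      (Nat.card C.carrier : k) ^ Nat.card X *
        ((Nat.card G : k) / Nat.card C.carrier) ^ Nat.card L * F (fun _ => C) := by
    rw [Finset.sum_congr rfl (g := fun _ =>
        ((Nat.card G : k) / Nat.card C.carrier) ^ Nat.card L * F (fun _ => C)),
      Finset.sum_const, ← Fintype.card_subtype, nsmul_eq_mul, ← Nat.card_eq_fintype_card,
      mul_assoc, ← Nat.cast_pow, ← card_pi_conjClass]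
    · simp_rw [funext_iff, Function.const_apply]
    · intro g hg
      have hgC := (Finset.mem_filter.mp hg).2
      rw [hgC, card_fixedPoints_gaugeSmul (congrFun hgC), Function.const_def]
  rw [← Finset.sum_fiberwise (g := fun (g : X → G) x => ConjClasses.mk (g x))]
  refine (Fintype.sum_of_injective (Function.const X) Function.const_injective _ _
    (fun c hc => Finset.sum_eq_zero fun g hg => ?_) fun C => (hconst C).symm).symm
  rw [hvanish g ((Finset.mem_filter.mp hg).2 ▸ hc), Nat.cast_zero, zero_mul]

theorem MultigraphConnected.average_card_fixedPoints_gaugeSmul_mul {k : Type*} [Field k]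
    [CharZero k] [Finite G] [Finite X] [Nonempty X] [Finite L] [Fintype (X → G)]
    [Fintype (ConjClasses G)] (hconn : MultigraphConnected s t)
    (F : (X → ConjClasses G) → k) :
    (Nat.card (X → G) : k)⁻¹ * ∑ g : X → G, Nat.card (Function.fixedPoints (gaugeSmul s t g)) *
        F (fun x => ConjClasses.mk (g x)) =
      ∑ C : ConjClasses G, ((Nat.card G : k) / Nat.card C.carrier) ^
        ((Nat.card L : ℤ) - Nat.card X) * F (fun _ => C) := by
  have hG : (Nat.card G : k) ≠ 0 := Nat.cast_ne_zero.mpr Nat.card_pos.ne'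
  have hC (C : ConjClasses G) : (Nat.card C.carrier : k) ≠ 0 :=
    Nat.cast_ne_zero.mpr (card_conjClass_carrier_ne_zero C)
  rw [hconn.sum_card_fixedPoints_gaugeSmul_mul, Nat.card_fun, Nat.cast_pow, Finset.mul_sum]
  exact Fintype.sum_congr _ _ fun C => by
    rw [← mul_assoc, inv_pow_mul_pow_mul_div_pow hG (hC C)]

end GaugeFixedPoints

theorem character_linkRep {G X L : Type*} [Group G] [Finite G] [Finite L] (s t : L → X)
    (g : X → G) :
    (linkRep G s t).character g = Nat.card (Function.fixedPoints (gaugeSmul s t g)) := by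
  rw [← fixedPoints_gaugeSmul_inv]
  exact trace_funLeft _

theorem character_matterRepFamily {G X : Type*} [Group G] [Fintype X] {W : X → Type*}
    [∀ x, AddCommGroup (W x)] [∀ x, Module ℂ (W x)] [∀ x, FiniteDimensional ℂ (W x)]
    (U : ∀ x, Representation ℂ G (W x)) (g : X → G) :
    (matterRepFamily U).character g = ∏ x, (U x).character (g x) :=
  trace_piTensorProduct_map _

/-- **Master counting formula with site-dependent matter representations.** -/
theorem master_counting_formula_site_dependent
    {G X L : Type*} [Group G] [Fintype G] [DecidableEq G]
    [Fintype X] [Nonempty X] [Fintype L]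
    (s t : L → X) (hconn : MultigraphConnected s t)
    {W : X → Type*} [∀ x, AddCommGroup (W x)] [∀ x, Module ℂ (W x)]
    [∀ x, FiniteDimensional ℂ (W x)]
    (U : ∀ x, Representation ℂ G (W x)) :
    (Module.finrank ℂ ((linkRep G s t).tprod (matterRepFamily U)).invariants : ℂ) =
      ∑ C : ConjClasses G,
        ((Fintype.card G : ℂ) / (Nat.card C.carrier : ℂ)) ^
            ((Fintype.card L : ℤ) - (Fintype.card X : ℤ)) *
          ∏ x : X, LinearMap.trace ℂ (W x) (U x (Quotient.out C)) := by
  classical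
  have : Invertible (Nat.card (X → G) : ℂ) :=
    invertibleOfNonzero (Nat.cast_ne_zero.mpr Nat.card_pos.ne')
  calc (Module.finrank ℂ ((linkRep G s t).tprod (matterRepFamily U)).invariants : ℂ)
    _ = (Nat.card (X → G) : ℂ)⁻¹ * ∑ g : X → G,
          ((linkRep G s t).tprod (matterRepFamily U)).character g :=
        (Representation.card_inv_mul_sum_char_eq_finrank _).symm
    _ = (Nat.card (X → G) : ℂ)⁻¹ * ∑ g : X → G,
          Nat.card (Function.fixedPoints (gaugeSmul s t g)) *
            ∏ x, (U x).character (Quotient.out (ConjClasses.mk (g x))) := by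
        simp_rw [Representation.char_tensor, Pi.mul_apply, character_linkRep,
          character_matterRepFamily, character_out_mk]
    _ = ∑ C : ConjClasses G, ((Nat.card G : ℂ) / Nat.card C.carrier) ^
          ((Nat.card L : ℤ) - Nat.card X) * ∏ x, (U x).character (Quotient.out C) :=
        hconn.average_card_fixedPoints_gaugeSmul_mul
          fun c => ∏ x, (U x).character (Quotient.out (c x))
    _ = _ := by
        simp only [Nat.card_eq_fintype_card, Representation.character]
end

section
/- Let K be a field, let W be a K-vector space of finite dimension n, and let f : W → W be a linear endomorphism. For every scalar t ∈ K, det(id_W + t·f) = Σ_{k=0}^{n} tr(Λ^k f) · t^k, where Λ^k f denotes the induced endomorphism of the k-th exterior power Λ^k W. Equivalently, the trace of the induced map on the k-th exterior power equals the k-th elementary symmetric polynomial in the eigenvalues of f. -/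
/-- The exterior algebra map induced by a linear endomorphism preserves the `k`-th
exterior power. -/
lemma map_mem_exteriorPower {K W : Type*} [CommRing K] [AddCommGroup W] [Module K W]
    (f : W →ₗ[K] W) (k : ℕ) {x : ExteriorAlgebra K W} (hx : x ∈ ⋀[K]^k W) :
    ExteriorAlgebra.map f x ∈ ⋀[K]^k W := by
  rw [← ExteriorAlgebra.ιMulti_span_fixedDegree] at hx ⊢
  induction hx using Submodule.span_induction with
  | mem y hy =>
      obtain ⟨v, rfl⟩ := hy
      exact Submodule.subset_span ⟨f ∘ v, (ExteriorAlgebra.map_apply_ιMulti f v).symm⟩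
  | zero => simp
  | add y z hy hz ihy ihz => simpa using Submodule.add_mem _ ihy ihz
  | smul c y hy ihy => simpa using Submodule.smul_mem _ c ihy

/-- The endomorphism `Λ^k f` of the `k`-th exterior power `⋀[K]^k W` induced by a
linear endomorphism `f` of `W`, determined by
`(Λ^k f) (v₁ ∧ ⋯ ∧ v_k) = f v₁ ∧ ⋯ ∧ f v_k`. -/
noncomputable def exteriorPowerMap {K W : Type*} [CommRing K] [AddCommGroup W]
    [Module K W] (k : ℕ) (f : W →ₗ[K] W) : ⋀[K]^k W →ₗ[K] ⋀[K]^k W :=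
  (ExteriorAlgebra.map f).toLinearMap.restrict
    (fun _ hx => map_mem_exteriorPower f k hx)

/-!
The minors of the matrix of `f` are the matrix entries of `Λ^k f` in the basis of `k`-fold wedge
products of basis vectors, so `tr (Λ^k f)` is the sum of the principal `k × k` minors. By
multilinearity of the determinant, this sum is also the coefficient of `t ^ k` in `det (1 + t • f)`.
-/

section ExteriorPower

variable {R M N : Type*} [CommRing R] [AddCommGroup M] [Module R M] [AddCommGroup N] [Module R N]

lemma exteriorPowerMap_eq_map (k : ℕ) (f : M →ₗ[R] M) :
    exteriorPowerMap k f = exteriorPower.map k f := by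
  ext v
  change ExteriorAlgebra.map f (ExteriorAlgebra.ιMulti R k v) = _
  simp [Function.comp_def]

open Set.powersetCard in
lemma toMatrix_exteriorPower_map_apply {I J : Type*} [LinearOrder I] [Fintype I]
    [LinearOrder J] [Finite J] (b : Module.Basis I R M) (c : Module.Basis J R N) (k : ℕ)
    (f : M →ₗ[R] N) (s : Set.powersetCard J k) (t : Set.powersetCard I k) :
    LinearMap.toMatrix (b.exteriorPower k) (c.exteriorPower k) (exteriorPower.map k f) s t =
      ((LinearMap.toMatrix b c f).submatrix (ofFinEmbEquiv.symm s) (ofFinEmbEquiv.symm t)).det := by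
  rw [LinearMap.toMatrix_apply, exteriorPower.basis_repr_apply, exteriorPower.basis_apply,
    exteriorPower.map_apply_ιMulti_family, exteriorPower.ιMulti_family,
    exteriorPower.ιMultiDual_apply_ιMulti, ← Matrix.det_transpose]
  congr 1
  ext i j
  simp [LinearMap.toMatrix_apply]

lemma trace_exteriorPower_map_eq_sum_minors {I : Type*} [LinearOrder I] [Fintype I]
    (b : Module.Basis I R M) (k : ℕ) (f : M →ₗ[R] M) :
    LinearMap.trace R (⋀[R]^k M) (exteriorPower.map k f) =
      ∑ s ∈ Finset.univ.powersetCard k,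
        ((LinearMap.toMatrix b b f).submatrix
          (Subtype.val : s → I) (Subtype.val : s → I)).det := by
  rw [LinearMap.trace_eq_matrix_trace R (b.exteriorPower k), Matrix.trace,
    Finset.sum_subtype (p := (· ∈ Set.powersetCard I k)) _ (by simp [Set.powersetCard.mem_iff])]
  refine Finset.sum_congr rfl fun s _ => ?_
  rw [Matrix.diag_apply, toMatrix_exteriorPower_map_apply,
    ← Matrix.det_submatrix_equiv_self (Set.powersetCard.orderIsoOfFin s).toEquiv]
  rfl

end ExteriorPower

lemma det_one_add_smul_eq_sum_minors {R n : Type*} [CommRing R] [Fintype n] [DecidableEq n]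
    (A : Matrix n n R) (t : R) :
    (1 + t • A).det =
      ∑ k ∈ Finset.range (Fintype.card n + 1),
        (∑ s ∈ Finset.univ.powersetCard k,
          (A.submatrix (Subtype.val : s → n) (Subtype.val : s → n)).det) * t ^ k := by
  let p : Polynomial R := (1 + (Polynomial.X : Polynomial R) • A.map Polynomial.C).det
  have eval_p : p.eval t = (1 + t • A).det := by
    simp [p, eval_det, ← Matrix.smul_eq_mul_diagonal]
  have natDegree_p : p.natDegree ≤ Fintype.card n := by
    simpa [p, add_comm] using Polynomial.natDegree_det_X_add_C_le A 1
  rw [← eval_p, Polynomial.eval_eq_sum_range' (Nat.lt_succ_of_le natDegree_p)]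
  simp only [p, Matrix.coeff_det_one_add_X_smul_eq_sum_minors]

theorem det_one_add_smul_eq_sum_trace_exteriorPower_general
    {R M : Type*} [CommRing R] [AddCommGroup M] [Module R M] [Module.Free R M]
    [Module.Finite R M] (f : M →ₗ[R] M) (t : R) :
    LinearMap.det (LinearMap.id + t • f) =
      ∑ k ∈ Finset.range (Module.finrank R M + 1),
        LinearMap.trace R (⋀[R]^k M) (exteriorPowerMap k f) * t ^ k := by
  nontriviality R
  let b := Module.finBasis R M
  calc LinearMap.det (LinearMap.id + t • f)
      = (1 + t • LinearMap.toMatrix b b f).det := by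
        rw [← LinearMap.det_toMatrix b, map_add, map_smul, LinearMap.toMatrix_id]
    _ = ∑ k ∈ Finset.range (Module.finrank R M + 1),
          LinearMap.trace R (⋀[R]^k M) (exteriorPowerMap k f) * t ^ k := by
        simp only [det_one_add_smul_eq_sum_minors, Fintype.card_fin, exteriorPowerMap_eq_map,
          trace_exteriorPower_map_eq_sum_minors b]

/-- For a linear endomorphism `f` of an `n`-dimensional vector space `W` over a field
`K` and any scalar `t`, `det (id + t • f) = ∑_{k=0}^{n} tr (Λ^k f) * t ^ k`. -/
theorem det_one_add_smul_eq_sum_trace_exteriorPower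
    {K : Type*} [Field K] {W : Type*} [AddCommGroup W] [Module K W]
    [FiniteDimensional K W] (f : W →ₗ[K] W) (t : K) :
    LinearMap.det (LinearMap.id + t • f) =
      ∑ k ∈ Finset.range (Module.finrank K W + 1),
        LinearMap.trace K (⋀[K]^k W) (exteriorPowerMap k f) * t ^ k :=
  det_one_add_smul_eq_sum_trace_exteriorPower_general f t
end

section
/- The binary tetrahedral group SL(2, F₃) (the special linear group of 2×2 matrices of determinant 1 over the field with 3 elements, a group of order 24) is quasi-ambivalent but not ambivalent. That is: (a) there exists an element g ∈ SL(2, F₃) that is not conjugate to g⁻¹; and (b) there exists a group automorphism τ of SL(2, F₃) with τ ∘ τ = id such that for every g ∈ SL(2, F₃), τ(g) is conjugate to g⁻¹. -/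
/-!
Over any field `K`, conjugation by a matrix of determinant `-1` sends each `g ∈ SL(2, K)` into the
`SL(2, K)`-class of `g⁻¹`. Indeed a `2 × 2` matrix of trace zero is the negative of its adjugate,
so if `tr Y = tr (Y g) = 0`, then `Y g = -adj(Y g) = -adj(g) adj(Y) = g⁻¹ Y`; these two linear
conditions on `Y` always leave room for `det Y = -1`. Conjugation by `diag(1, -1)` is therefore an
involutory class-inverting automorphism.

On the other hand, if a nontrivial transvection is conjugate to its inverse in `SL(2, K)`, then
`-1` is a square in `K`, and `-1` is not a square modulo `3`.
-/

open Matrix Matrix.SpecialLinearGroup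

/-- A class-inverting automorphism: it sends every element into the conjugacy class of its
inverse. -/
def IsClassInverting {G : Type*} [Group G] (τ : G ≃* G) : Prop :=
  ∀ g, IsConj (τ g) g⁻¹

section ConjByGL

variable {n R : Type*} [Fintype n] [DecidableEq n] [CommRing R]

instance : SMul (ConjAct (GL n R)) (SpecialLinearGroup n R) where
  smul P g := ⟨(ConjAct.ofConjAct P).val * g * (ConjAct.ofConjAct P)⁻¹.val, by
    rw [det_units_conj, g.det_coe]⟩

instance : MulDistribMulAction (ConjAct (GL n R)) (SpecialLinearGroup n R) :=
  toGL_injective.mulDistribMulAction toGL fun _ _ ↦ Units.ext rfl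

/-- The automorphism `g ↦ P * g * P⁻¹` of `SL n R` given by an invertible matrix `P`, as a
homomorphism in `P`. It is inner in `GL n R`, but in general not in `SL n R`. -/
def conjByGL : GL n R →* MulAut (SpecialLinearGroup n R) :=
  (MulDistribMulAction.toMulAut (ConjAct (GL n R)) (SpecialLinearGroup n R)).comp
    ConjAct.toConjAct.toMonoidHom

lemma coe_conjByGL_apply (P : GL n R) (g : SpecialLinearGroup n R) :
    (conjByGL P g : Matrix n n R) = P.val * g * P⁻¹.val :=
  rfl

lemma conjByGL_trans_self {P : GL n R} (hP : P * P = 1) :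
    (conjByGL P).trans (conjByGL P) = MulEquiv.refl _ :=
  calc conjByGL P * conjByGL P = conjByGL (P * P) := (map_mul conjByGL P P).symm
    _ = 1 := by rw [hP, map_one]

lemma isConj_conjByGL_of_mul_eq_mul {P : GL n R} {g h : SpecialLinearGroup n R}
    {Y : Matrix n n R} (hdet : Y.det = P.val.det) (hY : Y * g = h * Y) :
    IsConj (conjByGL P g) h := by
  have hdet_one : (Y * P⁻¹.val).det = 1 := by
    rw [det_mul, hdet, ← det_mul, Units.mul_inv, det_one]
  refine isConj_iff.mpr ⟨⟨Y * P⁻¹.val, hdet_one⟩, ?_⟩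
  refine mul_inv_eq_iff_eq_mul.mpr (coeMonoidHom_injective ?_)
  calc Y * P⁻¹.val * (conjByGL P g : Matrix n n R)
      = Y * g * P⁻¹.val := by
        simp only [coe_conjByGL_apply, mul_assoc, Units.inv_mul_cancel_left]
    _ = h * (Y * P⁻¹.val) := by rw [hY, mul_assoc]

end ConjByGL

section Adjugate

variable {R : Type*} [CommRing R] {A Y : Matrix (Fin 2) (Fin 2) R}

lemma adjugate_eq_neg_of_trace_eq_zero (hA : A.trace = 0) : A.adjugate = -A := by
  rw [trace_fin_two] at hA
  ext i j
  fin_cases i <;> fin_cases j <;> simp [adjugate_fin_two]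
  · linear_combination hA
  · linear_combination hA

lemma mul_eq_adjugate_mul_of_trace_eq_zero (hY : Y.trace = 0) (hYA : (Y * A).trace = 0) :
    Y * A = A.adjugate * Y :=
  calc Y * A = -(Y * A).adjugate := by rw [adjugate_eq_neg_of_trace_eq_zero hYA, neg_neg]
    _ = A.adjugate * -Y.adjugate := by rw [adjugate_mul_distrib, mul_neg]
    _ = A.adjugate * Y := by rw [adjugate_eq_neg_of_trace_eq_zero hY, neg_neg]

end Adjugate

lemma exists_det_eq_neg_one_trace_eq_zero {K : Type*} [Field K] (A : Matrix (Fin 2) (Fin 2) K) :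
    ∃ Y : Matrix (Fin 2) (Fin 2) K, Y.det = -1 ∧ Y.trace = 0 ∧ (Y * A).trace = 0 := by
  by_cases h10 : A 1 0 = 0
  · by_cases h01 : A 0 1 = 0
    · exact ⟨!![0, 1; 1, 0], by simp [trace_fin_two, vecMul, dotProduct, h01, h10]⟩
    · refine ⟨!![1, 0; (A 1 1 - A 0 0) / A 0 1, -1], ?_⟩
      simp [trace_fin_two, vecMul, dotProduct, h01, sub_eq_add_neg]
  · refine ⟨!![1, (A 1 1 - A 0 0) / A 1 0; 0, -1], ?_⟩
    simp [trace_fin_two, vecMul, dotProduct, h10]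

theorem isClassInverting_conjByGL {K : Type*} [Field K] {P : GL (Fin 2) K}
    (hP : P.val.det = -1) : IsClassInverting (conjByGL P) := by
  intro g
  obtain ⟨Y, hdet, htrace, htrace_mul⟩ := exists_det_eq_neg_one_trace_eq_zero g.val
  exact isConj_conjByGL_of_mul_eq_mul (hdet.trans hP.symm)
    (mul_eq_adjugate_mul_of_trace_eq_zero htrace htrace_mul)

/-- The reflection `diag(1, -1)` in the first coordinate axis: an involution of determinant `-1`,
conjugation by which is the class-inverting automorphism of `SL(2, K)`. -/
def axisReflection (R : Type*) [CommRing R] : GL (Fin 2) R where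
  val := !![1, 0; 0, -1]
  inv := !![1, 0; 0, -1]
  val_inv := by simp [one_fin_two]
  inv_val := by simp [one_fin_two]

lemma axisReflection_mul_self (R : Type*) [CommRing R] :
    axisReflection R * axisReflection R = 1 :=
  mul_inv_cancel (axisReflection R)

lemma det_axisReflection (R : Type*) [CommRing R] : (axisReflection R).val.det = -1 := by
  simp [axisReflection]

section Transvection

variable {R : Type*} [CommRing R] [NoZeroDivisors R]

lemma exists_eq_sq_mul_of_isConj_transvection {b c : R} (hc : c ≠ 0)
    (h : IsConj (SpecialLinearGroup.transvection (zero_ne_one (α := Fin 2)) b)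
      (SpecialLinearGroup.transvection zero_ne_one c)) :
    ∃ u, c = u ^ 2 * b := by
  obtain ⟨x, hx⟩ := isConj_iff.mp h
  have hmul := congrArg coeMonoidHom (mul_inv_eq_iff_eq_mul.mp hx)
  have h_lower : x 1 0 = 0 := by
    simpa [transvection_coe, mul_apply, add_mul, hc] using congr($hmul 0 0)
  have h_upper : x 0 0 * b + x 0 1 = x 0 1 + c * x 1 1 := by
    simpa [transvection_coe, mul_apply, add_mul] using congr($hmul 0 1)
  have hdet : x 0 0 * x 1 1 = 1 := by
    simpa [det_fin_two, h_lower] using (det_fin_two x.val).symm.trans x.det_coe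
  exact ⟨x 0 0, by linear_combination -x 0 0 * h_upper - c * hdet⟩

lemma isSquare_neg_one_of_isConj_transvection_inv {b : R} (hb : b ≠ 0)
    (h : IsConj (SpecialLinearGroup.transvection (zero_ne_one (α := Fin 2)) b)
      (SpecialLinearGroup.transvection zero_ne_one b)⁻¹) :
    IsSquare (-1 : R) := by
  rw [transvection_inv] at h
  obtain ⟨u, hu⟩ := exists_eq_sq_mul_of_isConj_transvection (neg_ne_zero.mpr hb) h
  exact ⟨u, mul_right_cancel₀ hb (by linear_combination hu)⟩

end Transvection

theorem binaryTetrahedral_quasiambivalent_not_ambivalent_general {K : Type*} [Field K]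
    (hK : ¬ IsSquare (-1 : K)) :
    (∃ g : SpecialLinearGroup (Fin 2) K, ¬ IsConj g g⁻¹) ∧
    (∃ τ : SpecialLinearGroup (Fin 2) K ≃* SpecialLinearGroup (Fin 2) K,
      τ.trans τ = MulEquiv.refl _ ∧
      ∀ g : SpecialLinearGroup (Fin 2) K, IsConj (τ g) g⁻¹) :=
  ⟨⟨SpecialLinearGroup.transvection zero_ne_one 1,
      mt (isSquare_neg_one_of_isConj_transvection_inv one_ne_zero) hK⟩,
    conjByGL (axisReflection K),
    conjByGL_trans_self (axisReflection_mul_self K),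
    isClassInverting_conjByGL (det_axisReflection K)⟩

/-- **The binary tetrahedral group `SL(2, 𝔽₃)` is quasi-ambivalent but not
ambivalent**: (a) some element is not conjugate to its own inverse, but (b) there is
an involutory class-inverting automorphism, i.e. a group automorphism `τ` with
`τ ∘ τ = id` such that `τ g` is conjugate to `g⁻¹` for every `g`. -/
theorem binaryTetrahedral_quasiambivalent_not_ambivalent :
    (∃ g : Matrix.SpecialLinearGroup (Fin 2) (ZMod 3), ¬ IsConj g g⁻¹) ∧
    (∃ τ : Matrix.SpecialLinearGroup (Fin 2) (ZMod 3) ≃*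
        Matrix.SpecialLinearGroup (Fin 2) (ZMod 3),
      τ.trans τ = MulEquiv.refl _ ∧
      ∀ g : Matrix.SpecialLinearGroup (Fin 2) (ZMod 3), IsConj (τ g) g⁻¹) :=
  binaryTetrahedral_quasiambivalent_not_ambivalent_general fun h ↦
    ZMod.exists_sq_eq_neg_one_iff.mp h rfl
end
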